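/- Let G be a finitely presented group that is not residually finite, and suppose rdef(G) = n where n is a natural number with n > 1. Let W = {w₁,…,w_{n−1}} be a set of non-trivial elements of the finite residual R_G, and suppose that for some i, 1 ≤ i ≤ n−1, there exists a non-trivial element a in C_G(w_i) \ R_G. Then either rdef(G/⟨⟨W⟩⟩) > 1, or G/⟨⟨W⟩⟩ has a finite index subgroup N with rdef(N) > 1, where ⟨⟨W⟩⟩ denotes the normal closure of W in G. -/

import Mathlib

/-!
The second alternative always holds. Choose a presentation of `G` with residual deficiency
`x > n - 1/2`, with relators `uᵢ ^ mᵢ`, and a normal subgroup `H` of finite index `q` in which the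
orders of the `uᵢ` modulo `R_G` are realised and which misses the element `a` centralising `w i₀`.
Adding words for the `w j` presents `G ⧸ ⟨⟨W⟩⟩`, and since `W ⊆ R_G ≤ H` the image `N` of `H` there
still has index `q` and the same quotient.

Reidemeister–Schreier presents `N` on at least `1 + q (n' - 1)` generators, `n'` being the number of
generators for `G` (`schreier_lower`). A relator needs only one conjugate for each coset of the
cyclic group generated by the image of an element centralising it
(`exists_subgroup_presentation`). Thus `uᵢ ^ mᵢ` costs at most `q / kᵢ` relators, `w i₀` costs at
most `q / 2` because of `a`, and each other `w j` costs at most `q`. The deficiency of `N` is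
therefore at least `1 + q (x - n + 1/2) > 1`.

Ordinary deficiency is a lower bound for `rdef N` (`deficiency_le_rdef`), provided the set of
residual deficiencies of presentations of `N` is bounded above, the supremum being `0` otherwise.
The same computation gives this bound (`residual_le_rank`): a subgroup of index `q` has deficiency
at least `1 + q (x - 1)` for a presentation of residual deficiency `x`, whereas its deficiency is at
most its rank (`deficiency_le_card`), hence at most `q` times the rank of the whole group. The other
requirement of `rdef`, that relators be powers of elements which are not proper powers, is met by
`exists_root` after discarding trivial relators.
-/

open scoped Classical ENNReal

namespace ResDef

variable {G : Type*} [Group G]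

/-- The order of the image of `x` in `G ⧸ H`: the least positive `j` with `x ^ j ∈ H`,
or `0` if there is no such `j`. -/
noncomputable def orderIn (H : Subgroup G) (x : G) : ℕ :=
  sInf {j : ℕ | 0 < j ∧ x ^ j ∈ H}

/-- The finite residual: the intersection of all finite index subgroups. -/
def finiteResidual (G : Type*) [Group G] : Subgroup G :=
  ⨅ (H : Subgroup G) (_ : H.index ≠ 0), H

/-- An element of a free group is not a proper power. -/
def NotProperPower {α : Type*} (u : FreeGroup α) : Prop :=
  ∀ (v : FreeGroup α) (k : ℕ), u = v ^ k → k = 1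

/-- `G` admits a finite presentation. -/
def FinitelyPresentedGroup (G : Type*) [Group G] : Prop :=
  ∃ (n : ℕ) (R : Finset (FreeGroup (Fin n))) (φ : FreeGroup (Fin n) →* G),
    Function.Surjective φ ∧ φ.ker = Subgroup.normalClosure (R : Set (FreeGroup (Fin n)))

/-- The deficiency of a finitely presented group. -/
noncomputable def deficiency (G : Type*) [Group G] : ℝ :=
  sSup {x : ℝ | ∃ (n : ℕ) (R : Finset (FreeGroup (Fin n))) (φ : FreeGroup (Fin n) →* G),
    Function.Surjective φ ∧ φ.ker = Subgroup.normalClosure (R : Set (FreeGroup (Fin n))) ∧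
    x = (n : ℝ) - (R.card : ℝ)}

/-- The residual deficiency of a finitely presented group. -/
noncomputable def rdef (G : Type*) [Group G] : ℝ :=
  sSup {x : ℝ | ∃ (n s : ℕ) (u : Fin s → FreeGroup (Fin n)) (m : Fin s → ℕ)
    (φ : FreeGroup (Fin n) →* G),
    (∀ i, 1 ≤ m i) ∧ (∀ i, NotProperPower (u i)) ∧ Function.Surjective φ ∧
    φ.ker = Subgroup.normalClosure (Set.range fun i => u i ^ m i) ∧
    x = (n : ℝ) - ∑ i, ((orderIn (finiteResidual G) (φ (u i)) : ℝ))⁻¹}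

/-- The deficiency gradient. -/
noncomputable def DG (G : Type*) [Group G] : ℝ :=
  sSup {x : ℝ | ∃ H : Subgroup G, H.index ≠ 0 ∧
    x = (deficiency H - 1) / (H.index : ℝ)}

/-- `ν_p(r)`: the largest `k` such that `r = s ^ (p ^ k)` for some `s`. -/
noncomputable def nuP (p : ℕ) {α : Type*} (r : FreeGroup α) : ℕ :=
  sSup {k : ℕ | ∃ s : FreeGroup α, r = s ^ (p ^ k)}

/-- The `p`-deficiency of a group. -/
noncomputable def defP (p : ℕ) (G : Type*) [Group G] : ℝ :=
  sSup {x : ℝ | ∃ (n : ℕ) (R : Set (FreeGroup (Fin n))) (φ : FreeGroup (Fin n) →* G),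
    Function.Surjective φ ∧ φ.ker = Subgroup.normalClosure R ∧
    Summable (fun r : R => ((p : ℝ) ^ (nuP p r.1))⁻¹) ∧
    x = (n : ℝ) - ∑' r : R, ((p : ℝ) ^ (nuP p r.1))⁻¹}

/-- The `p`-deficiency gradient. -/
noncomputable def DGp (p : ℕ) (G : Type*) [Group G] : ℝ :=
  sSup {x : ℝ | ∃ H : Subgroup G, H.Normal ∧ H.index ≠ 0 ∧
    x = (defP p H - 1) / (H.index : ℝ)}

/-- The rank (minimal number of generators) of a group. -/
noncomputable def grpRank (G : Type*) [Group G] : ℕ :=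
  sInf {n : ℕ | ∃ S : Finset G, S.card = n ∧ Subgroup.closure (S : Set G) = ⊤}

/-- The rank gradient. -/
noncomputable def RG (G : Type*) [Group G] : ℝ :=
  sInf {x : ℝ | ∃ H : Subgroup G, H.index ≠ 0 ∧
    x = ((grpRank H : ℝ) - 1) / (H.index : ℝ)}

/-- The `p`-rank: the largest `n` such that `G` surjects onto `(C_p)^n`. -/
noncomputable def pRank (p : ℕ) (G : Type*) [Group G] : ℕ :=
  sSup {n : ℕ | ∃ f : G →* (Fin n → Multiplicative (ZMod p)), Function.Surjective f}

/-- The `p`-rank gradient. -/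
noncomputable def RGp (p : ℕ) (G : Type*) [Group G] : ℝ :=
  sInf {x : ℝ | ∃ H : Subgroup G, H.Normal ∧ H.index ≠ 0 ∧
    x = ((pRank p H : ℝ) - 1) / (H.index : ℝ)}

/-- `G` is large: some finite index subgroup surjects onto a free group of rank 2. -/
def Large (G : Type*) [Group G] : Prop :=
  ∃ H : Subgroup G, H.index ≠ 0 ∧ ∃ f : H →* FreeGroup (Fin 2), Function.Surjective f

/-- The first Betti number: the largest `n` such that `G` surjects onto `ℤ^n`. -/
noncomputable def firstBetti (G : Type*) [Group G] : ℕ :=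
  sSup {n : ℕ | ∃ f : G →* Multiplicative (Fin n → ℤ), Function.Surjective f}

/-- The order of the image of `x` in `G ⧸ H`, as an extended natural number. -/
noncomputable def orderInE (H : Subgroup G) (x : G) : ℕ∞ :=
  if orderIn H x = 0 then ⊤ else (orderIn H x : ℕ∞)

/-- `ν(g; G, K)` from the paper, valued in `ℕ∞`. -/
noncomputable def nu (K : Subgroup G) (g : G) : ℕ∞ :=
  if g ∈ K then
    sSup ((fun a : G => orderInE K a) '' {a : G | ∃ n : ℤ, a ^ n = g})
  else
    sSup ((fun q : G × ℤ => (q.2.natAbs : ℕ∞)) '' {q : G × ℤ | q.2 ≠ 0 ∧ q.1 ^ q.2 = g})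

/-- The relative size `ν(g;G,K)⁻¹` of an element (`0` if `ν` is infinite). -/
noncomputable def relsizeElem (K : Subgroup G) (g : G) : ℝ :=
  (((nu K g).toNat : ℝ))⁻¹

/-- The relative size of a finite set. -/
noncomputable def relsizeFinset (K : Subgroup G) (S : Finset G) : ℝ :=
  ∑ g ∈ S, relsizeElem K g

/-- The relative size of a normal subgroup `M`, finitely generated as a normal subgroup. -/
noncomputable def relsizeSubgroup (K M : Subgroup G) : ℝ :=
  sInf {x : ℝ | ∃ S : Finset G, Subgroup.normalClosure (S : Set G) = M ∧
    x = relsizeFinset K S}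

/-- `a` is a minimal root of `g` in `G` with respect to `K`. -/
def IsMinimalRoot (K : Subgroup G) (g a : G) : Prop :=
  (g ∈ K ∧ (∃ n : ℤ, a ^ n = g) ∧ ((orderIn K a : ℕ∞) = nu K g)) ∨
  (g ∉ K ∧ ∃ m : ℕ, (m : ℕ∞) = nu K g ∧ a ^ m = g)


/-! ### Roots in free groups -/

/-- A nontrivial element of a free group is a positive power of an element which is not a proper
power. -/
lemma exists_root {α : Type*} (r : FreeGroup α) (hr : r ≠ 1) :
    ∃ (v : FreeGroup α) (e : ℕ), 1 ≤ e ∧ NotProperPower v ∧ r = v ^ e := by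
  have hbound : ∀ (v : FreeGroup α) (k : ℕ), r = v ^ k → k ≤ r.norm := by
    intro v k hk
    rcases Nat.eq_zero_or_pos k with rfl | hk0
    · exact Nat.zero_le _
    have hv : v ≠ 1 := by rintro rfl; exact hr (by simpa using hk)
    have hne : FreeGroup.reduceCyclically v.toWord ≠ [] := by
      intro h
      have h2 := FreeGroup.reduceCyclically.conj_conjugator_reduceCyclically v.toWord
      rw [h] at h2
      apply hv
      rw [← FreeGroup.mk_toWord (x := v), ← h2, ← FreeGroup.mul_mk, ← FreeGroup.mul_mk,
        ← FreeGroup.inv_mk, ← FreeGroup.one_eq_mk]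
      group
    have hlen : 1 ≤ (FreeGroup.reduceCyclically v.toWord).length :=
      List.length_pos_iff.2 hne
    rw [hk, FreeGroup.norm, FreeGroup.toWord_pow,
      FreeGroup.reduceCyclically.reduce_flatten_replicate FreeGroup.isReduced_toWord,
      if_neg hk0.ne']
    simp only [List.length_append, List.length_flatten, List.map_replicate, List.sum_replicate,
      smul_eq_mul]
    nlinarith
  let P : ℕ → Prop := fun k => ∃ v : FreeGroup α, r = v ^ k
  have hP1 : P 1 := ⟨r, by simp⟩
  have h1 : 1 ≤ r.norm := hbound r 1 (by simp)
  obtain ⟨v, hv⟩ : P (Nat.findGreatest P r.norm) := Nat.findGreatest_spec h1 hP1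
  have he : 1 ≤ Nat.findGreatest P r.norm := Nat.le_findGreatest h1 hP1
  refine ⟨v, _, he, ?_, hv⟩
  intro z k hz
  have hzk : r = z ^ (k * Nat.findGreatest P r.norm) := by rw [pow_mul, ← hz, ← hv]
  have hle : k * Nat.findGreatest P r.norm ≤ Nat.findGreatest P r.norm :=
    Nat.le_findGreatest (hbound z _ hzk) ⟨z, hzk⟩
  have hk0 : k ≠ 0 := by
    rintro rfl
    exact hr (by simpa using hzk)
  have : k ≤ 1 := by
    by_contra hcon
    nlinarith
  omega

/-! ### Subgroups of finite index in free groups -/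

/-- Schreier's index formula, as a lower bound: `m` elements generating a subgroup of index `q` in
a free group of rank `n` satisfy `m ≥ 1 + q (n - 1)`. The Schreier graph has `q` vertices and
`n q` edges; its edge space is spanned by the loops of the `m` generators together with one path
from the base vertex to each of the other `q - 1` vertices. -/
lemma schreier_lower {n m : ℕ} (K : Subgroup (FreeGroup (Fin n))) (hK : K.index ≠ 0)
    (S : Fin m → FreeGroup (Fin n)) (hS : Subgroup.closure (Set.range S) = K) :
    n * K.index + 1 ≤ m + K.index := by
  let X := FreeGroup (Fin n) ⧸ K
  have : K.FiniteIndex := ⟨hK⟩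
  have : Fintype X := Fintype.ofFinite X
  -- the edge space of the Schreier graph
  let E := (Fin n × X) → ℚ
  let e : Fin n → X → E := fun i x => Pi.single (i, x) 1
  let σ : FreeGroup (Fin n) →* Equiv.Perm (X × E) := FreeGroup.lift fun i =>
    { toFun := fun p => (FreeGroup.of i • p.1, p.2 + e i p.1)
      invFun := fun p => ((FreeGroup.of i)⁻¹ • p.1, p.2 - e i ((FreeGroup.of i)⁻¹ • p.1))
      left_inv := fun p => by simp
      right_inv := fun p => by simp }
  have hσof : ∀ (i : Fin n) (p : X × E),
      σ (FreeGroup.of i) p = (FreeGroup.of i • p.1, p.2 + e i p.1) := by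
    intro i p
    simp only [σ, FreeGroup.lift_apply_of, Equiv.coe_fn_mk]
  -- `c g x` is the 1-chain of the path labelled `g` starting at `x`
  have hσ : ∀ g : FreeGroup (Fin n), ∃ c : X → E, ∀ p : X × E, σ g p = (g • p.1, p.2 + c p.1) := by
    intro g
    induction g using FreeGroup.induction_on with
    | C1 => exact ⟨0, fun p => by simp⟩
    | of i => exact ⟨e i, hσof i⟩
    | inv_of i h =>
      refine ⟨fun x => - e i ((FreeGroup.of i)⁻¹ • x), fun p => ?_⟩
      rw [map_inv, Equiv.Perm.inv_eq_iff_eq]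
      rw [hσof]
      exact Prod.ext (by simp) (neg_add_cancel_right _ _).symm
    | mul g h hg hh =>
      obtain ⟨c, hc⟩ := hg
      obtain ⟨d, hd⟩ := hh
      refine ⟨fun x => d x + c (h • x), fun p => ?_⟩
      rw [map_mul, Equiv.Perm.mul_apply, hd, hc]
      simp [mul_smul, add_assoc]
  choose c hc using hσ
  have hcmul : ∀ (g h : FreeGroup (Fin n)) (x : X), c (g * h) x = c h x + c g (h • x) := by
    intro g h x
    have h1 := hc (g * h) (x, 0)
    rw [map_mul, Equiv.Perm.mul_apply, hc, hc] at h1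
    simpa using (congrArg Prod.snd h1).symm
  have hcone : ∀ x : X, c 1 x = 0 := by
    intro x
    have h1 := hcmul 1 1 x
    simpa using h1
  have hcof : ∀ (i : Fin n) (x : X), c (FreeGroup.of i) x = e i x := by
    intro i x
    have h1 := hc (FreeGroup.of i) (x, 0)
    rw [hσof] at h1
    simpa using (congrArg Prod.snd h1).symm
  let o : X := ((1 : FreeGroup (Fin n)) : X)
  have hko : ∀ g : FreeGroup (Fin n), g • o = (g : X) := by
    intro g
    change ((g * 1 : FreeGroup (Fin n)) : X) = _
    simp
  have hfix : ∀ k ∈ K, k • o = o := by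
    intro k hk
    rw [hko]
    exact QuotientGroup.eq.2 (by simpa using K.inv_mem hk)
  let t : X → FreeGroup (Fin n) := fun x => Quotient.out x
  have ht : ∀ x : X, ((t x : FreeGroup (Fin n)) : X) = x := fun x => Quotient.out_eq' x
  let B : Fin m ⊕ {x : X // x ≠ o} → E :=
    Sum.elim (fun j => c (S j) o) (fun x => c (t x.1) o)
  let V : Submodule ℚ E := Submodule.span ℚ (Set.range B)
  have hVK : ∀ k ∈ K, c k o ∈ V := by
    intro k hk
    rw [← hS] at hk
    induction hk using Subgroup.closure_induction with
    | mem x hx =>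
      obtain ⟨j, rfl⟩ := hx
      exact Submodule.subset_span ⟨Sum.inl j, rfl⟩
    | one => rw [hcone]; exact V.zero_mem
    | mul a b ha hb iha ihb =>
      rw [hS] at hb
      rw [hcmul, hfix b hb]
      exact V.add_mem ihb iha
    | inv a ha iha =>
      rw [hS] at ha
      have h1 := hcmul a⁻¹ a o
      rw [inv_mul_cancel, hcone, hfix a ha] at h1
      rw [← neg_eq_of_add_eq_zero_right h1.symm]
      exact V.neg_mem iha
  have hVt : ∀ x : X, c (t x) o ∈ V := by
    intro x
    by_cases hx : x = o
    · apply hVK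
      have h1 : ((1 : FreeGroup (Fin n)) : X) = ((t x : FreeGroup (Fin n)) : X) := by rw [ht, hx]
      simpa using QuotientGroup.eq.1 h1
    · exact Submodule.subset_span ⟨Sum.inr ⟨x, hx⟩, rfl⟩
  have hVall : ∀ g : FreeGroup (Fin n), c g o ∈ V := by
    intro g
    have h1 : (t (g : X))⁻¹ * g ∈ K := QuotientGroup.eq.1 (ht (g : X))
    have h2 := hcmul (t (g : X)) ((t (g : X))⁻¹ * g) o
    rw [mul_inv_cancel_left, hfix _ h1] at h2
    rw [h2]
    exact V.add_mem (hVK _ h1) (hVt _)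
  have hVe : ∀ i x, e i x ∈ V := by
    intro i x
    have h1 := hcmul (FreeGroup.of i) (t x) o
    rw [hko, ht, hcof] at h1
    rw [eq_sub_of_add_eq' h1.symm]
    exact V.sub_mem (hVall _) (hVall _)
  have hVtop : V = ⊤ := by
    rw [eq_top_iff, ← (Pi.basisFun ℚ (Fin n × X)).span_eq, Submodule.span_le]
    rintro _ ⟨⟨i, x⟩, rfl⟩
    simpa [e] using hVe i x
  have hfin : Module.finrank ℚ E ≤ Fintype.card (Fin m ⊕ {x : X // x ≠ o}) := by
    have h1 := finrank_range_le_card (R := ℚ) B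
    rw [Set.finrank] at h1
    change Module.finrank ℚ V ≤ _ at h1
    rwa [hVtop, finrank_top] at h1
  have hcard : Fintype.card X = K.index := by
    rw [Subgroup.index, Nat.card_eq_fintype_card]
  rw [Module.finrank_fintype_fun_eq_card, Fintype.card_prod, Fintype.card_sum, Fintype.card_fin,
    Fintype.card_fin, Fintype.card_subtype_compl, Fintype.card_subtype_eq, hcard] at hfin
  have : 1 ≤ K.index := Nat.one_le_iff_ne_zero.2 hK
  omega

/-- Nielsen–Schreier with the lower bound `m ≥ 1 + q (n - 1)` for the rank of a subgroup of
index `q`. -/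
lemma free_of_finiteIndex {n : ℕ} (K : Subgroup (FreeGroup (Fin n))) (hK : K.index ≠ 0) :
    ∃ m : ℕ, Nonempty (FreeGroup (Fin m) ≃* K) ∧ n * K.index + 1 ≤ m + K.index := by
  have : K.FiniteIndex := ⟨hK⟩
  have hfg : Group.FG K := inferInstance
  let X := IsFreeGroup.Generators K
  let μ : FreeGroup X ≃* K := IsFreeGroup.mulEquiv K
  have hfin : Finite X := by
    have h1 : Group.FG (FreeGroup X) := Group.fg_of_surjective (f := μ.symm.toMonoidHom)
      μ.symm.surjective
    obtain ⟨S, hS, hSfin⟩ := Group.fg_iff.1 h1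
    have : Finite S := hSfin
    -- a homomorphism to the two-element group is determined by its values on the finite set `S`,
    -- so only finitely many coordinate functions on `X` can exist
    let δ : X → FreeGroup X →* Multiplicative (ZMod 2) :=
      fun x => FreeGroup.lift fun x' => Multiplicative.ofAdd (if x = x' then 1 else 0)
    refine Finite.of_injective (fun (x : X) (y : S) => δ x y) ?_
    intro x x' hxx
    have h2 : δ x = δ x' := MonoidHom.eq_of_eqOn_dense hS fun y hy => congrFun hxx ⟨y, hy⟩
    have h3 := DFunLike.congr_fun h2 (FreeGroup.of x)
    simp only [δ, FreeGroup.lift_apply_of] at h3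
    by_contra hne
    rw [if_pos trivial, if_neg (Ne.symm hne)] at h3
    exact one_ne_zero (Multiplicative.ofAdd.injective h3)
  obtain ⟨m, ⟨ε⟩⟩ := Finite.exists_equiv_fin X
  let ν : FreeGroup (Fin m) ≃* K := (FreeGroup.freeGroupCongr ε.symm).trans μ
  refine ⟨m, ⟨ν⟩, schreier_lower K hK (fun i => (ν (FreeGroup.of i) : FreeGroup (Fin n))) ?_⟩
  have h1 : Set.range (fun i => (ν (FreeGroup.of i) : FreeGroup (Fin n))) =
      (K.subtype.comp ν.toMonoidHom) '' Set.range FreeGroup.of := by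
    rw [← Set.range_comp]; rfl
  rw [h1, ← MonoidHom.map_closure, FreeGroup.closure_range_of, ← MonoidHom.range_eq_map,
    MonoidHom.range_comp, MonoidHom.range_eq_top.2 ν.surjective, ← MonoidHom.range_eq_map,
    Subgroup.range_subtype]

/-! ### Deficiency and generators, and finite quotients -/

/-- The deficiency of a presentation is at most the number of elements in any generating family:
the homomorphisms to `ℚ` form a space of dimension at least `m - s`, and such a homomorphism is
determined by its values on generators. -/
lemma deficiency_le_card {Γ : Type*} [Group Γ] {m s d : ℕ} (φ : FreeGroup (Fin m) →* Γ)
    (hφ : Function.Surjective φ) (ρ : Fin s → FreeGroup (Fin m))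
    (hker : φ.ker = Subgroup.normalClosure (Set.range ρ))
    (y : Fin d → Γ) (hy : Subgroup.closure (Set.range y) = ⊤) : m ≤ s + d := by
  choose z hz using fun j => hφ (y j)
  let h : (Fin m → ℚ) → FreeGroup (Fin m) →* Multiplicative ℚ :=
    fun v => FreeGroup.lift fun i => Multiplicative.ofAdd (v i)
  have hadd : ∀ v w, h (v + w) = h v * h w := by
    intro v w
    ext i
    simp [h]
  have hsmul : ∀ (a : ℚ) v (g), (h (a • v) g).toAdd = a * (h v g).toAdd := by
    intro a v g
    have : h (a • v) = (AddMonoidHom.toMultiplicative (AddMonoidHom.mulLeft a)).comp (h v) := by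
      ext i
      simp [h]
    rw [this]
    simp
  let L : (Fin m → ℚ) →ₗ[ℚ] (Fin s ⊕ Fin d → ℚ) :=
    { toFun := fun v => Sum.elim (fun i => (h v (ρ i)).toAdd) (fun j => (h v (z j)).toAdd)
      map_add' := by
        intro v w
        ext (i | j) <;> simp [hadd]
      map_smul' := by
        intro a v
        ext (i | j) <;> simp [hsmul] }
  have hL : Function.Injective L := by
    rw [← LinearMap.ker_eq_bot, LinearMap.ker_eq_bot']
    intro v hv
    have h1 : ∀ i, h v (ρ i) = 1 := fun i => congrFun hv (Sum.inl i)
    have h2 : ∀ j, h v (z j) = 1 := fun j => congrFun hv (Sum.inr j)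
    have hkerle : φ.ker ≤ (h v).ker := by
      rw [hker]
      apply Subgroup.normalClosure_le_normal
      rintro _ ⟨i, rfl⟩
      exact h1 i
    have htop : ∀ g : Γ, ∀ f : FreeGroup (Fin m), φ f = g → h v f = 1 := by
      intro g
      have hg : g ∈ Subgroup.closure (Set.range y) := by rw [hy]; trivial
      induction hg using Subgroup.closure_induction with
      | mem x hx =>
        obtain ⟨j, rfl⟩ := hx
        intro f hf
        have h3 : f * (z j)⁻¹ ∈ φ.ker := by
          rw [MonoidHom.mem_ker, map_mul, map_inv, hf, hz, mul_inv_cancel]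
        have h4 : h v (f * (z j)⁻¹) = 1 := hkerle h3
        simpa [h2] using h4
      | one =>
        intro f hf
        exact hkerle hf
      | mul a b _ _ iha ihb =>
        intro f hf
        obtain ⟨a', rfl⟩ := hφ a
        have h3 := ihb (a'⁻¹ * f) (by rw [map_mul, hf, map_inv, inv_mul_cancel_left])
        have h4 := iha a' rfl
        rw [map_mul, map_inv, h4] at h3
        simpa using h3
      | inv a _ iha =>
        intro f hf
        have h3 := iha f⁻¹ (by rw [map_inv, hf, inv_inv])
        simpa using h3
    ext i
    have := htop _ (FreeGroup.of i) rfl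
    simpa [h] using this
  have := LinearMap.finrank_le_finrank_of_injective hL
  simpa using this

/-- Finitely many elements outside the finite residual are avoided by a single normal subgroup of
finite index. -/
lemma exists_normal_avoiding {Γ : Type*} [Group Γ] (S : Set Γ) (hS : S.Finite)
    (h : ∀ y ∈ S, y ∉ finiteResidual Γ) :
    ∃ H : Subgroup Γ, H.Normal ∧ H.index ≠ 0 ∧ ∀ y ∈ S, y ∉ H := by
  induction S, hS using Set.Finite.induction_on with
  | empty => exact ⟨⊤, inferInstance, by simp, by simp⟩
  | @insert a S _ _ ih =>
    obtain ⟨H, hHn, hHi, hH⟩ := ih fun y hy => h y (Set.mem_insert_of_mem _ hy)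
    have ha := h a (Set.mem_insert _ _)
    simp only [finiteResidual, Subgroup.mem_iInf, not_forall] at ha
    obtain ⟨A, hAi, hA⟩ := ha
    have : A.FiniteIndex := ⟨hAi⟩
    refine ⟨H ⊓ A.normalCore, inferInstance, ?_, ?_⟩
    · exact Subgroup.index_inf_ne_zero hHi Subgroup.FiniteIndex.index_ne_zero
    · rintro y (rfl | hy) hmem
      · exact hA (A.normalCore_le hmem.2)
      · exact hH y hy hmem.1

lemma finiteResidual_le {Γ : Type*} [Group Γ] (H : Subgroup Γ) (hH : H.index ≠ 0) :
    finiteResidual Γ ≤ H := iInf₂_le H hH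

/-! ### Presentations of subgroups of finite index -/

/-- Reidemeister–Schreier with multiplicities. The relators `r d` of `Γ` come with elements `c d`
that centralise them, exactly for `d ∈ A` and modulo the relators in `A` for the others. Then in a
normal subgroup `N` of index `q` the relator `r d` contributes only one conjugate for each coset of
the cyclic subgroup generated by `c d` in `Γ ⧸ N`, that is at most `q / k d` relators when `c d` has
order at least `k d` there. -/
lemma exists_subgroup_presentation {Γ : Type*} [Group Γ] {n : ℕ} {D : Type} [Fintype D]
    (ψ : FreeGroup (Fin n) →* Γ) (hψ : Function.Surjective ψ) (r c : D → FreeGroup (Fin n))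
    (hker : ψ.ker = Subgroup.normalClosure (Set.range r)) (A : Set D)
    (hA : ∀ d ∈ A, Commute (c d) (r d))
    (hB : ∀ d, c d * r d * (c d)⁻¹ * (r d)⁻¹ ∈ Subgroup.normalClosure (r '' A))
    (N : Subgroup Γ) [N.Normal] (hN : N.index ≠ 0) (k : D → ℕ) (hk0 : ∀ d, 0 < k d)
    (hk : ∀ d j, 0 < j → j < k d → ψ (c d) ^ j ∉ N) :
    ∃ (m s : ℕ) (φ : FreeGroup (Fin m) →* N) (ρ : Fin s → FreeGroup (Fin m)),
      Function.Surjective φ ∧ φ.ker = Subgroup.normalClosure (Set.range ρ) ∧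
      n * N.index + 1 ≤ m + N.index ∧ (s : ℝ) ≤ N.index * ∑ d, ((k d : ℝ))⁻¹ := by
  let π : FreeGroup (Fin n) →* Γ ⧸ N := (QuotientGroup.mk' N).comp ψ
  have hπ : Function.Surjective π := (QuotientGroup.mk'_surjective N).comp hψ
  have hKi : (N.comap ψ).index = N.index := Subgroup.index_comap_of_surjective N hψ
  have hπK : ∀ x, π x = 1 → x ∈ N.comap ψ := fun x hx => (QuotientGroup.eq_one_iff (ψ x)).1 hx
  have : N.FiniteIndex := ⟨hN⟩
  obtain ⟨m, ⟨ν⟩, hm⟩ := free_of_finiteIndex (N.comap ψ) (by rwa [hKi])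
  rw [hKi] at hm
  choose t ht using hπ
  have hrker : ∀ d, ψ (r d) = 1 := by
    intro d
    have : r d ∈ ψ.ker := by rw [hker]; exact Subgroup.subset_normalClosure ⟨d, rfl⟩
    exact this
  let J := Σ d : D, (Γ ⧸ N) ⧸ Subgroup.zpowers (π (c d))
  let rel : J → FreeGroup (Fin n) := fun j => t j.2.out * r j.1 * (t j.2.out)⁻¹
  have hrel : ∀ j, ψ (rel j) = 1 := by
    intro j
    simp [rel, hrker]
  have hrelK : ∀ j, rel j ∈ N.comap ψ := by
    intro j
    rw [Subgroup.mem_comap, hrel]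
    exact N.one_mem
  have hJ : Fintype J := Fintype.ofFinite J
  let ε := Fintype.equivFin J
  let ρ : Fin (Fintype.card J) → FreeGroup (Fin m) := fun i => ν.symm ⟨rel (ε.symm i), hrelK _⟩
  let φ : FreeGroup (Fin m) →* N := (ψ.subgroupComap N).comp ν.toMonoidHom
  have hφ : ∀ x, (φ x : Γ) = ψ (ν x) := fun x => rfl
  refine ⟨m, Fintype.card J, φ, ρ, ?_, ?_, hm, ?_⟩
  · exact (ψ.subgroupComap_surjective_of_surjective N hψ).comp ν.surjective
  · apply le_antisymm
    · -- `L` is the subgroup of the free group normally generated in `ψ⁻¹ N` by the conjugates kept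
      let L : Subgroup (FreeGroup (Fin n)) :=
        (Subgroup.normalClosure (Set.range ρ)).map ((N.comap ψ).subtype.comp ν.toMonoidHom)
      have hLconj : ∀ κ ∈ N.comap ψ, ∀ x ∈ L, κ * x * κ⁻¹ ∈ L := by
        rintro κ hκ _ ⟨x, hx, rfl⟩
        refine ⟨ν.symm ⟨κ, hκ⟩ * x * (ν.symm ⟨κ, hκ⟩)⁻¹,
          Subgroup.normalClosure_normal.conj_mem x hx _, ?_⟩
        simp
      have hLrel : ∀ j, rel j ∈ L := by
        intro j
        refine ⟨ρ (ε j), Subgroup.subset_normalClosure ⟨_, rfl⟩, ?_⟩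
        simp [ρ]
      have hmain : ∀ P : Subgroup (FreeGroup (Fin n)), P.Normal → P ≤ L → ∀ d,
          c d * r d * (c d)⁻¹ * (r d)⁻¹ ∈ P → ∀ f, f * r d * f⁻¹ ∈ L := by
        intro P hP hPL d hd f
        obtain ⟨⟨_, z, rfl⟩, hz⟩ :=
          QuotientGroup.mk_out_eq_mul (Subgroup.zpowers (π (c d))) (π f)
        set y := (QuotientGroup.mk (s := Subgroup.zpowers (π (c d))) (π f)).out with hy
        have hκ : f * c d ^ z * (t y)⁻¹ ∈ N.comap ψ := by
          apply hπK
          rw [map_mul, map_mul, map_inv, ht, map_zpow, hz]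
          simp
        have hp : (r d)⁻¹ * (c d ^ z)⁻¹ * r d * c d ^ z ∈ P := by
          have h1 : Commute (c d : FreeGroup (Fin n) ⧸ P) (r d : FreeGroup (Fin n) ⧸ P) := by
            have h0 := (QuotientGroup.eq_one_iff _).2 hd
            simpa [mul_inv_eq_one, mul_inv_eq_iff_eq_mul, commute_iff_eq] using h0
          have h2 := h1.zpow_left z
          rw [← mul_inv_rev, mul_assoc, ← QuotientGroup.eq]
          exact h2.eq
        have h3 := hLconj _ hκ _ (L.mul_mem (hLrel ⟨d, QuotientGroup.mk (π f)⟩)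
          (hPL (hP.conj_mem _ hp (t y))))
        have h4 : f * r d * f⁻¹ = f * c d ^ z * (t y)⁻¹ *
            (rel ⟨d, QuotientGroup.mk (π f)⟩ *
              (t y * ((r d)⁻¹ * (c d ^ z)⁻¹ * r d * c d ^ z) * (t y)⁻¹)) *
            (f * c d ^ z * (t y)⁻¹)⁻¹ := by
          simp only [rel, ← hy]
          group
        rw [h4]
        exact h3
      have hcl : ∀ T : Set D, (∀ d ∈ T, ∀ f, f * r d * f⁻¹ ∈ L) →
          Subgroup.normalClosure (r '' T) ≤ L := by
        intro T hT
        rw [Subgroup.normalClosure, Subgroup.closure_le]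
        intro x hx
        obtain ⟨_, ⟨d, hd, rfl⟩, hconj⟩ := Group.mem_conjugatesOfSet_iff.1 hx
        obtain ⟨f, rfl⟩ := isConj_iff.1 hconj
        exact hT d hd f
      have hAL : Subgroup.normalClosure (r '' A) ≤ L := hcl A fun d hd =>
        hmain ⊥ inferInstance bot_le d
          (by rw [Subgroup.mem_bot, (hA d hd).eq]; group)
      have hall : ψ.ker ≤ L := by
        rw [hker, ← Set.image_univ]
        exact hcl _ fun d _ => hmain _ Subgroup.normalClosure_normal hAL d (hB d)
      intro x hx
      have hx1 : (ν x : FreeGroup (Fin n)) ∈ ψ.ker := by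
        rw [MonoidHom.mem_ker, ← hφ, MonoidHom.mem_ker.1 hx]; rfl
      obtain ⟨x', hx', he⟩ := hall hx1
      have : x' = x := ν.injective (Subtype.ext he)
      rwa [← this]
    · apply Subgroup.normalClosure_le_normal
      rintro _ ⟨i, rfl⟩
      apply Subtype.ext
      rw [hφ]
      simp [ρ, hrel]
  · rw [← Nat.card_eq_fintype_card, Nat.card_sigma, Nat.cast_sum, Finset.mul_sum]
    refine Finset.sum_le_sum fun d _ => ?_
    rw [← div_eq_mul_inv, le_div_iff₀ (by exact_mod_cast hk0 d)]
    have h1 : k d ≤ orderOf (π (c d)) := by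
      by_contra! hlt
      refine hk d _ (orderOf_pos (π (c d))) hlt ?_
      have h2 := pow_orderOf_eq_one (π (c d))
      generalize orderOf (π (c d)) = o at h2
      rw [← map_pow] at h2
      simpa using hπK _ h2
    have h2 := (Subgroup.zpowers (π (c d))).index_mul_card
    rw [Nat.card_zpowers] at h2
    change _ = N.index at h2
    have h3 : Nat.card ((Γ ⧸ N) ⧸ Subgroup.zpowers (π (c d))) * k d ≤ N.index := by
      rw [← h2]
      exact Nat.mul_le_mul_left _ h1
    exact_mod_cast h3

/-! ### Bounds for the residual deficiency -/

lemma orderIn_pos {Γ : Type*} [Group Γ] (H : Subgroup Γ) {x : Γ} {m : ℕ} (hm : 1 ≤ m)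
    (hx : x ^ m = 1) : 0 < orderIn H x :=
  (Nat.sInf_mem (s := {j : ℕ | 0 < j ∧ x ^ j ∈ H}) ⟨m, hm, by rw [hx]; exact H.one_mem⟩).1

lemma pow_notMem_of_lt_orderIn {Γ : Type*} [Group Γ] (H : Subgroup Γ) {x : Γ} {j : ℕ}
    (hj : 0 < j) (hlt : j < orderIn H x) : x ^ j ∉ H :=
  fun h => Nat.notMem_of_lt_sInf hlt ⟨hj, h⟩

/-- Some normal subgroup of finite index realises simultaneously the orders modulo the finite
residual of finitely many elements, and avoids a given finite set outside the finite residual. -/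
lemma exists_normal_orders {Γ : Type*} [Group Γ] {s : ℕ} (x : Fin s → Γ) (T : Set Γ)
    (hT : T.Finite) (hTR : ∀ y ∈ T, y ∉ finiteResidual Γ) :
    ∃ H : Subgroup Γ, H.Normal ∧ H.index ≠ 0 ∧ (∀ y ∈ T, y ∉ H) ∧
      ∀ i j, 0 < j → j < orderIn (finiteResidual Γ) (x i) → x i ^ j ∉ H := by
  obtain ⟨H, hHn, hHi, hH⟩ := exists_normal_avoiding
    (T ∪ ⋃ i, (fun j => x i ^ j) '' Set.Ioo 0 (orderIn (finiteResidual Γ) (x i)))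
    (hT.union (Set.finite_iUnion fun i => (Set.finite_Ioo _ _).image _)) (by
      rintro y (hy | hy)
      · exact hTR y hy
      · obtain ⟨i, j, ⟨hj, hlt⟩, rfl⟩ := Set.mem_iUnion.1 hy
        exact pow_notMem_of_lt_orderIn _ hj hlt)
  exact ⟨H, hHn, hHi, fun y hy => hH y (Or.inl hy), fun i j hj hlt =>
    hH _ (Or.inr (Set.mem_iUnion.2 ⟨i, j, ⟨hj, hlt⟩, rfl⟩))⟩

/-- The residual deficiency of any presentation is bounded in terms of the rank of the group, so
that the supremum defining `rdef` is a genuine one. -/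
lemma residual_le_rank {Γ : Type*} [Group Γ] [Group.FG Γ] {n s : ℕ} (u : Fin s → FreeGroup (Fin n))
    (m : Fin s → ℕ) (φ : FreeGroup (Fin n) →* Γ) (hm : ∀ i, 1 ≤ m i) (hφ : Function.Surjective φ)
    (hker : φ.ker = Subgroup.normalClosure (Set.range fun i => u i ^ m i)) :
    (n : ℝ) - ∑ i, ((orderIn (finiteResidual Γ) (φ (u i)) : ℝ))⁻¹ ≤ Group.rank Γ + 1 := by
  obtain ⟨H, hHn, hHi, -, hH⟩ := exists_normal_orders (fun i => φ (u i)) ∅ Set.finite_empty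
    (by simp)
  have hone : ∀ i, φ (u i) ^ m i = 1 := by
    intro i
    have : u i ^ m i ∈ φ.ker := by rw [hker]; exact Subgroup.subset_normalClosure ⟨i, rfl⟩
    rwa [MonoidHom.mem_ker, map_pow] at this
  obtain ⟨m', s', φ', ρ, hφ', hker', h1, h2⟩ := exists_subgroup_presentation φ hφ
    (fun i => u i ^ m i) u hker Set.univ (fun i _ => Commute.self_pow _ _)
    (fun i => by rw [(Commute.self_pow (u i) (m i)).eq]; simp) H hHi
    (fun i => orderIn (finiteResidual Γ) (φ (u i))) (fun i => orderIn_pos _ (hm i) (hone i)) hH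
  have : H.FiniteIndex := ⟨hHi⟩
  have hrank := Subgroup.rank_le_index_mul_rank H
  obtain ⟨S, hScard, hS⟩ := Group.rank_spec H
  have h3 := deficiency_le_card φ' hφ' ρ hker' (fun j => (S.equivFin.symm j : H)) (by
    rw [← hS]
    congr 1
    ext x
    constructor
    · rintro ⟨j, rfl⟩
      exact (S.equivFin.symm j).2
    · intro hx
      exact ⟨S.equivFin ⟨x, hx⟩, by simp⟩)
  have h4 : n * H.index + 1 ≤ s' + H.index * Group.rank Γ + H.index := by omega
  have h5 : (n : ℝ) * H.index + 1 ≤ s' + H.index * Group.rank Γ + H.index := by exact_mod_cast h4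
  have hq : (0 : ℝ) < H.index := by exact_mod_cast Nat.pos_of_ne_zero hHi
  refine le_of_mul_le_mul_left ?_ hq
  linarith

/-- The ordinary deficiency of a finite presentation is a lower bound for `rdef`. -/
lemma deficiency_le_rdef {Γ : Type*} [Group Γ] {m s : ℕ} (φ : FreeGroup (Fin m) →* Γ)
    (hφ : Function.Surjective φ) (ρ : Fin s → FreeGroup (Fin m))
    (hker : φ.ker = Subgroup.normalClosure (Set.range ρ)) : (m : ℝ) - s ≤ rdef Γ := by
  have : Group.FG Γ := Group.fg_of_surjective hφ
  -- `rdef` only admits nontrivial relators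
  let ε := Fintype.equivFin {i : Fin s // ρ i ≠ 1}
  choose v e he hv hve using fun i : {i : Fin s // ρ i ≠ 1} => exists_root (ρ i.1) i.2
  have hs : Fintype.card {i : Fin s // ρ i ≠ 1} ≤ s := by
    exact (Fintype.card_subtype_le _).trans_eq (Fintype.card_fin s)
  have hle : (m : ℝ) - ∑ i, ((orderIn (finiteResidual Γ) (φ (v (ε.symm i))) : ℝ))⁻¹ ≤ rdef Γ := by
    refine le_csSup ⟨Group.rank Γ + 1, ?_⟩ ⟨m, _, fun i => v (ε.symm i), fun i => e (ε.symm i), φ,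
      fun i => he _, fun i => hv _, hφ, ?_, rfl⟩
    · rintro x ⟨n, s, u, k, φ, hk, -, hφ, hker, rfl⟩
      exact residual_le_rank u k φ hk hφ hker
    · rw [hker]
      apply le_antisymm
      · apply Subgroup.normalClosure_le_normal
        rintro _ ⟨i, rfl⟩
        by_cases hi : ρ i = 1
        · rw [hi]
          exact Subgroup.one_mem _
        · refine Subgroup.subset_normalClosure ⟨ε ⟨i, hi⟩, ?_⟩
          simp [← hve]
      · apply Subgroup.normalClosure_mono
        rintro _ ⟨i, rfl⟩
        exact ⟨(ε.symm i).1, hve _⟩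
  have hsum : ∑ i, ((orderIn (finiteResidual Γ) (φ (v (ε.symm i))) : ℝ))⁻¹ ≤
      Fintype.card {i : Fin s // ρ i ≠ 1} := by
    refine (Finset.sum_le_sum fun i _ => Nat.cast_inv_le_one _).trans ?_
    simp
  have hs' : (Fintype.card {i : Fin s // ρ i ≠ 1} : ℝ) ≤ s := by exact_mod_cast hs
  linarith

/-- if `G` is finitely presented, not residually finite, `rdef(G) = n` a
natural number greater than one, and `W = {w₁,…,w_{n−1}}` are non-trivial elements of
`R_G` one of which has a non-trivial centralising element outside `R_G`, then either
`rdef(G/⟨⟨W⟩⟩) > 1` or `G/⟨⟨W⟩⟩` has a finite index subgroup with residual deficiency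
greater than one. -/
theorem statement19 {G : Type*} [Group G] (hG : FinitelyPresentedGroup G)
    (hnrf : finiteResidual G ≠ ⊥) (n : ℕ) (hn : 1 < n) (hrd : rdef G = (n : ℝ))
    (w : Fin (n - 1) → G) (hw1 : ∀ i, w i ≠ 1)
    (hwR : ∀ i, w i ∈ finiteResidual G)
    (hcent : ∃ i, ∃ a : G, a ≠ 1 ∧ a ∈ Subgroup.centralizer {w i} ∧
      a ∉ finiteResidual G) :
    1 < rdef (G ⧸ Subgroup.normalClosure (Set.range w)) ∨
    ∃ N : Subgroup (G ⧸ Subgroup.normalClosure (Set.range w)),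
      N.index ≠ 0 ∧ 1 < rdef N := by
  right
  obtain ⟨i₀, a, -, hac, haR⟩ := hcent
  have hcomm : w i₀ * a = a * w i₀ := Subgroup.mem_centralizer_iff.1 hac _ rfl
  -- the supremum need not be attained; coming within `1 / 2` of it is enough
  have hne : {x : ℝ | ∃ (n s : ℕ) (u : Fin s → FreeGroup (Fin n)) (m : Fin s → ℕ)
      (φ : FreeGroup (Fin n) →* G),
      (∀ i, 1 ≤ m i) ∧ (∀ i, NotProperPower (u i)) ∧ Function.Surjective φ ∧
      φ.ker = Subgroup.normalClosure (Set.range fun i => u i ^ m i) ∧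
      x = (n : ℝ) - ∑ i, ((orderIn (finiteResidual G) (φ (u i)) : ℝ))⁻¹}.Nonempty := by
    by_contra hemp
    rw [Set.not_nonempty_iff_eq_empty] at hemp
    rw [rdef, hemp, Real.sSup_empty] at hrd
    have : n = 0 := by exact_mod_cast hrd.symm
    omega
  have hlt : (n : ℝ) - 1 / 2 < rdef G := by rw [hrd]; linarith
  obtain ⟨x, ⟨n', s, u, m, φ, hm, -, hφ, hker, hx⟩, hxn⟩ := exists_lt_of_lt_csSup hne hlt
  have hone : ∀ i, φ (u i) ^ m i = 1 := by
    intro i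
    have : u i ^ m i ∈ φ.ker := by rw [hker]; exact Subgroup.subset_normalClosure ⟨i, rfl⟩
    rwa [MonoidHom.mem_ker, map_pow] at this
  obtain ⟨H, hHn, hHi, haH, hH⟩ := exists_normal_orders (fun i => φ (u i)) {a}
    (Set.finite_singleton a) (by rintro y rfl; exact haR)
  set W := Subgroup.normalClosure (Set.range w) with hW
  have hWH : W ≤ H := by
    apply Subgroup.normalClosure_le_normal
    rintro _ ⟨i, rfl⟩
    exact finiteResidual_le H hHi (hwR i)
  let N : Subgroup (G ⧸ W) := H.map (QuotientGroup.mk' W)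
  have hNmem : ∀ g : G, QuotientGroup.mk' W g ∈ N → g ∈ H := by
    intro g hg
    have h1 : N.comap (QuotientGroup.mk' W) = H :=
      Subgroup.comap_map_eq_self (by rwa [QuotientGroup.ker_mk'])
    rw [← h1]
    exact hg
  have hNn : N.Normal := hHn.map _ (QuotientGroup.mk'_surjective W)
  have hNi : N.index ≠ 0 := fun h =>
    hHi (Nat.eq_zero_of_zero_dvd (h ▸ Subgroup.index_map_dvd H (QuotientGroup.mk'_surjective W)))
  refine ⟨N, hNi, ?_⟩
  choose w' hw' using fun j => hφ (w j)
  obtain ⟨α, rfl⟩ := hφ a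
  let r : Fin s ⊕ Fin (n - 1) → FreeGroup (Fin n') := Sum.elim (fun i => u i ^ m i) w'
  let c : Fin s ⊕ Fin (n - 1) → FreeGroup (Fin n') :=
    Sum.elim u (fun j => if j = i₀ then α else 1)
  let k : Fin s ⊕ Fin (n - 1) → ℕ :=
    Sum.elim (fun i => orderIn (finiteResidual G) (φ (u i))) (fun j => if j = i₀ then 2 else 1)
  have hrA : r '' Set.range Sum.inl = Set.range fun i => u i ^ m i := by
    rw [← Set.range_comp]
    rfl
  have hkerψ : ((QuotientGroup.mk' W).comp φ).ker = Subgroup.normalClosure (Set.range r) := by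
    apply le_antisymm
    · intro y hy
      have h1 : φ y ∈ W := (QuotientGroup.eq_one_iff (φ y)).1 hy
      have h2 : W = (Subgroup.normalClosure (Set.range w')).map φ := by
        rw [Subgroup.map_normalClosure _ φ hφ, ← Set.range_comp, hW]
        congr 2
        funext j
        exact (hw' j).symm
      rw [h2] at h1
      obtain ⟨y', hy', he⟩ := h1
      have h3 : y * y'⁻¹ ∈ φ.ker := by
        rw [MonoidHom.mem_ker, map_mul, map_inv, he, mul_inv_cancel]
      rw [hker, ← hrA] at h3
      have h4 := Subgroup.mul_mem _
        (Subgroup.normalClosure_mono (Set.image_subset_range _ _) h3)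
        (Subgroup.normalClosure_mono (t := Set.range r)
          (by rintro _ ⟨j, rfl⟩; exact ⟨Sum.inr j, rfl⟩) hy')
      simpa using h4
    · apply Subgroup.normalClosure_le_normal
      rintro _ ⟨i | j, rfl⟩
      · simp [r, MonoidHom.mem_ker, hone]
      · have : w j ∈ W := Subgroup.subset_normalClosure ⟨j, rfl⟩
        simpa [r, MonoidHom.mem_ker, hw'] using this
  obtain ⟨m', s', φ', ρ, hφ', hker', h1, h2⟩ := exists_subgroup_presentation
    ((QuotientGroup.mk' W).comp φ) ((QuotientGroup.mk'_surjective W).comp hφ) r c hkerψ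
    (Set.range Sum.inl)
    (by rintro _ ⟨i, rfl⟩; exact Commute.self_pow _ _)
    (by
      rw [hrA, ← hker]
      rintro (i | j)
      · simp only [c, r, Sum.elim_inl, (Commute.self_pow (u i) (m i)).eq]
        simp
      · by_cases hj : j = i₀
        · subst hj
          simp [c, r, MonoidHom.mem_ker, hw', ← hcomm]
        · simp [c, hj])
    N hNi k
    (by
      rintro (i | j)
      · exact orderIn_pos _ (hm i) (hone i)
      · by_cases hj : j = i₀ <;> simp [k, hj])
    (by
      rintro (i | j) l hl hlt hmem
      · exact hH i l hl hlt (hNmem _ (by simpa [c] using hmem))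
      · by_cases hj : j = i₀
        · have hl1 : l = 1 := by simp [k, hj] at hlt; omega
          subst hl1
          exact haH (φ α) rfl (hNmem _ (by simpa [c, hj] using hmem))
        · simp [k, hj] at hlt
          omega)
  have hsum : ∑ d, ((k d : ℝ))⁻¹ = ((n' : ℝ) - x) + ((n : ℝ) - 1 - 1 / 2) := by
    rw [Fintype.sum_sum_type]
    congr 1
    · rw [hx, sub_sub_cancel]
      rfl
    · have h3 : ∀ j : Fin (n - 1), ((k (Sum.inr j) : ℝ))⁻¹ = 1 - if j = i₀ then 1 / 2 else 0 := by
        intro j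
        by_cases hj : j = i₀
        · simp only [k, Sum.elim_inr, hj, if_true]
          norm_num
        · simp [k, hj]
      rw [Finset.sum_congr rfl fun j _ => h3 j, Finset.sum_sub_distrib, Finset.sum_ite_eq']
      simp [Nat.cast_sub hn.le]
  have h3 := deficiency_le_rdef φ' hφ' ρ hker'
  have h4 : (n' : ℝ) * N.index + 1 ≤ m' + N.index := by exact_mod_cast h1
  have hq : (0 : ℝ) < N.index := by exact_mod_cast Nat.pos_of_ne_zero hNi
  rw [hsum] at h2
  have h5 := mul_pos hq (sub_pos.2 hxn)
  linarith

end ResDef
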